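/- Uniqueness of seeds: if P ~ P' and both P and P' are seeds, then P ≡D P'. -/

import Mathlib

namespace CCS

/-- Process terms over a set of actions `A`. -/
inductive Proc (A : Type) where
  | nil : Proc A
  | pre : A → Proc A → Proc A
  | par : Proc A → Proc A → Proc A
  | repl : A → Proc A → Proc A

namespace Proc

/-- Finite processes: no occurrence of replication. -/
def IsFin {A : Type} : Proc A → Prop
  | nil => True
  | pre _ p => IsFin p
  | par p q => IsFin p ∧ IsFin q
  | repl _ _ => False

/-- Processes of the calculus: replication is applied only to prefixed
finite processes, at top level. -/
def Wf {A : Type} : Proc A → Prop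
  | nil => True
  | pre _ p => IsFin p
  | par p q => Wf p ∧ Wf q
  | repl _ p => IsFin p

/-- Size: the number of prefixes. -/
def size {A : Type} : Proc A → ℕ
  | nil => 0
  | pre _ p => size p + 1
  | par p q => size p + size q
  | repl _ p => size p + 1

/-- `reps n p` is the parallel composition of `n` copies of `p`. -/
def reps {A : Type} : ℕ → Proc A → Proc A
  | 0, _ => nil
  | n+1, p => par p (reps n p)

/-- `bang F` is `!F`: for `F = α₁.F₁ | ... | αk.Fk` it is `!α₁.F₁ | ... | !αk.Fk`. -/
def bang {A : Type} : Proc A → Proc A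
  | nil => nil
  | pre a p => repl a p
  | par p q => par (bang p) (bang q)
  | repl a p => repl a p

end Proc

/-- The labelled transition system (no synchronisation). -/
inductive Step {A : Type} : Proc A → A → Proc A → Prop where
  | pre {a : A} {p : Proc A} : Step (Proc.pre a p) a p
  | repl {a : A} {p : Proc A} :
      Step (Proc.repl a p) a (Proc.par (Proc.repl a p) p)
  | parL {p : Proc A} {a : A} {p' : Proc A} (q : Proc A) :
      Step p a p' → Step (Proc.par p q) a (Proc.par p' q)
  | parR {q : Proc A} {a : A} {q' : Proc A} (p : Proc A) :
      Step q a q' → Step (Proc.par p q) a (Proc.par p q')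

/-- Strong bisimulations. -/
def IsBisim {A : Type} (R : Proc A → Proc A → Prop) : Prop :=
  Symmetric R ∧
    ∀ p q, R p q → ∀ a p', Step p a p' → ∃ q', Step q a q' ∧ R p' q'

/-- Strong bisimilarity `~`: the greatest strong bisimulation. -/
def Bisim {A : Type} (p q : Proc A) : Prop :=
  ∃ R, IsBisim R ∧ R p q

/-- The congruence `≡D`: the smallest congruence generated by the abelian
monoid laws for parallel composition (neutral element `0`) and the
distribution law `α.(F | α.F | ... | α.F) = α.F | α.F | ... | α.F`
(with as many occurrences of `F` on both sides). -/
inductive EqD {A : Type} : Proc A → Proc A → Prop where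
  | refl (p : Proc A) : EqD p p
  | symm {p q : Proc A} : EqD p q → EqD q p
  | trans {p q r : Proc A} : EqD p q → EqD q r → EqD p r
  | parComm (p q : Proc A) : EqD (Proc.par p q) (Proc.par q p)
  | parAssoc (p q r : Proc A) :
      EqD (Proc.par (Proc.par p q) r) (Proc.par p (Proc.par q r))
  | parNil (p : Proc A) : EqD (Proc.par p Proc.nil) p
  | distr (a : A) (F : Proc A) (n : ℕ) (hF : F.IsFin) :
      EqD (Proc.pre a (Proc.par F (Proc.reps n (Proc.pre a F))))
          (Proc.reps (n + 1) (Proc.pre a F))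
  | congPre (a : A) {p q : Proc A} : EqD p q → EqD (Proc.pre a p) (Proc.pre a q)
  | congPar {p p' q q' : Proc A} :
      EqD p p' → EqD q q' → EqD (Proc.par p q) (Proc.par p' q')
  | congRepl (a : A) {p q : Proc A} : EqD p q → EqD (Proc.repl a p) (Proc.repl a q)

/-- Finite (single-hole) contexts `D ::= [] | α.D | D|F`. -/
inductive FCtx (A : Type) where
  | hole : FCtx A
  | pre : A → FCtx A → FCtx A
  | par : FCtx A → Proc A → FCtx A

/-- Filling the hole of a finite context. -/
def FCtx.fill {A : Type} : FCtx A → Proc A → Proc A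
  | .hole, p => p
  | .pre a d, p => Proc.pre a (d.fill p)
  | .par d f, p => Proc.par (d.fill p) f

/-- Well-formedness of a finite context: the processes placed in parallel
are finite. -/
def FCtx.Wf {A : Type} : FCtx A → Prop
  | .hole => True
  | .pre _ d => d.Wf
  | .par d f => d.Wf ∧ f.IsFin

/-- Single-hole contexts `C ::= D | !α.D | C|P` (the hole never occurs
directly under a replication). -/
inductive Ctx (A : Type) where
  | ofD : FCtx A → Ctx A
  | repl : A → FCtx A → Ctx A
  | par : Ctx A → Proc A → Ctx A

/-- Filling the hole of a context. -/
def Ctx.fill {A : Type} : Ctx A → Proc A → Proc A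
  | .ofD d, p => d.fill p
  | .repl a d, p => Proc.repl a (d.fill p)
  | .par c q, p => Proc.par (c.fill p) q

/-- Well-formedness of a context. -/
def Ctx.Wf {A : Type} : Ctx A → Prop
  | .ofD d => d.Wf
  | .repl _ d => d.Wf
  | .par c p => c.Wf ∧ p.Wf

/-- `k` consecutive transitions. -/
inductive NSteps {A : Type} : Proc A → ℕ → Proc A → Prop where
  | zero (p : Proc A) : NSteps p 0 p
  | succ {p : Proc A} {a : A} {p' : Proc A} {k : ℕ} {q : Proc A} :
      Step p a p' → NSteps p' k q → NSteps p (k + 1) q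

/-- `P ⇒k Q`: `k` transitions from `P` reach a process `≡D Q`. -/
def Reduct {A : Type} (p : Proc A) (k : ℕ) (q : Proc A) : Prop :=
  ∃ p', NSteps p k p' ∧ EqD p' q

/-- `TopRepl S a G` holds when `!a.G` is one of the (top-level) replicated
parallel components of `S`. -/
inductive TopRepl {A : Type} : Proc A → A → Proc A → Prop where
  | repl (a : A) (p : Proc A) : TopRepl (Proc.repl a p) a p
  | parL {p : Proc A} {a : A} {r : Proc A} (q : Proc A) :
      TopRepl p a r → TopRepl (Proc.par p q) a r
  | parR {q : Proc A} {a : A} {r : Proc A} (p : Proc A) :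
      TopRepl q a r → TopRepl (Proc.par p q) a r

/-- `S` has only replicated components: `S = ∏i !αi.Si`. -/
def ReplOnly {A : Type} : Proc A → Prop
  | .nil => True
  | .pre _ _ => False
  | .par p q => ReplOnly p ∧ ReplOnly q
  | .repl _ p => p.IsFin

/-- `S ⫫ F` : for no component `!αi.Si` of `S` and no `k` do we have
`F ⇒k αi.Si`. -/
def Dis {A : Type} (S F : Proc A) : Prop :=
  ∀ a G, TopRepl S a G → ∀ k, ¬ Reduct F k (Proc.pre a G)

/-- `S ▷ R` : there is `k > 0` with `S ⇒k S | R`. -/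
def Purg {A : Type} (S R : Proc A) : Prop :=
  ∃ k, 0 < k ∧ Reduct S k (Proc.par S R)

/-- A process is a seed if no (well-formed) process of strictly smaller
size is bisimilar to it. -/
def IsSeed {A : Type} (p : Proc A) : Prop :=
  p.Wf ∧ ∀ q : Proc A, q.Wf → Bisim q p → p.size ≤ q.size

/-- The rewriting relation `⤳_T` (first argument), defined modulo `≡D` by
the axioms (B1) `C[α.F] ⤳_{!α.F|F'} C[0]` and (B2) `!α.F | !α.F | P ⤳_Q !α.F | P`. -/
inductive Rw {A : Type} : Proc A → Proc A → Proc A → Prop where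
  | B1 {a : A} {F F' : Proc A} (C : Ctx A) :
      F.IsFin → F'.Wf → C.Wf →
      Rw (Proc.par (Proc.repl a F) F') (C.fill (Proc.pre a F)) (C.fill Proc.nil)
  | B2 {a : A} {F P Q : Proc A} :
      F.IsFin → P.Wf → Q.Wf →
      Rw Q (Proc.par (Proc.repl a F) (Proc.par (Proc.repl a F) P))
           (Proc.par (Proc.repl a F) P)
  | eqD {T T' P P' Q Q' : Proc A} :
      EqD T T' → EqD P P' → Rw T' P' Q' → EqD Q Q' → Rw T P Q

/-- `⤳*_T` : the reflexive transitive closure of `⤳_T`. -/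
def RwStar {A : Type} (T : Proc A) : Proc A → Proc A → Prop :=
  Relation.ReflTransGen (Rw T)

/-- Convertibility `P ⋈ Q`: some process `T` satisfies `P ⤳*_T T` and `Q ⤳*_T T`. -/
def Convert {A : Type} (P Q : Proc A) : Prop :=
  ∃ T : Proc A, T.Wf ∧ RwStar T P T ∧ RwStar T Q T

/-- `∏i αi.Fi` for a list of prefixed components. -/
def prodPre {A : Type} (l : List (A × Proc A)) : Proc A :=
  (l.map fun x => Proc.pre x.1 x.2).foldr Proc.par Proc.nil

/-- `∏i !αi.Fi` for a list of prefixed components. -/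
def bangProd {A : Type} (l : List (A × Proc A)) : Proc A :=
  (l.map fun x => Proc.repl x.1 x.2).foldr Proc.par Proc.nil

end CCS


namespace CCS

section UniqueDecomposition

variable {M : Type} [AddCommMonoid M]

/-- Indecomposable elements with respect to a size function. -/
def Indec (sz : M → ℕ) (p : M) : Prop :=
  0 < sz p ∧ ∀ x y, p = x + y → sz x = 0 ∨ sz y = 0

/-- Axioms on a graded commutative monoid with transitions. -/
structure Graded (sz : M → ℕ) (T : M → M → Prop) : Prop where
  zero : ∀ x, sz x = 0 ↔ x = 0
  add : ∀ x y, sz (x + y) = sz x + sz y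
  step : ∀ x y, T x y → sz y + 1 = sz x
  par : ∀ x y z, T (x + y) z ↔ (∃ x', T x x' ∧ z = x' + y) ∨ (∃ y', T y y' ∧ z = x + y')
  ex : ∀ x, 0 < sz x → ∃ y, T x y

variable {sz : M → ℕ} {T : M → M → Prop}

theorem Graded.sz0 (h : Graded sz T) : sz 0 = 0 := (h.zero 0).2 rfl

theorem Graded.step_sum [DecidableEq M] (h : Graded sz T) (s : Multiset M) :
    ∀ z, T s.sum z ↔ ∃ r ∈ s, ∃ r', T r r' ∧ z = r' + (s.erase r).sum := by
  induction s using Multiset.induction with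
  | empty =>
    intro z
    constructor
    · intro hz
      have := h.step _ _ hz
      simp [h.sz0] at this
    · simp
  | cons a s ih =>
    intro z
    rw [Multiset.sum_cons, h.par]
    constructor
    · rintro (⟨x', hx, rfl⟩ | ⟨y', hy, rfl⟩)
      · exact ⟨a, by simp, x', hx, by simp⟩
      · obtain ⟨r, hr, r', hT, rfl⟩ := (ih y').1 hy
        refine ⟨r, by simp [hr], r', hT, ?_⟩
        by_cases hra : r = a
        · subst hra
          have : (s.erase r) + {r} = s := by
            rw [add_comm, Multiset.singleton_add, Multiset.cons_erase hr]
          have h2 : s.sum = r + (s.erase r).sum := by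
            rw [← Multiset.sum_cons, Multiset.cons_erase hr]
          rw [Multiset.erase_cons_head, h2]
          abel
        · rw [Multiset.erase_cons_tail _ (fun h => hra h.symm), Multiset.sum_cons]
          abel
    · rintro ⟨r, hr, r', hT, rfl⟩
      by_cases hra : r = a
      · subst hra
        left
        exact ⟨r', hT, by simp⟩
      · right
        have hr' : r ∈ s := by simpa [hra] using hr
        refine ⟨r' + (s.erase r).sum, (ih _).2 ⟨r, hr', r', hT, rfl⟩, ?_⟩
        rw [Multiset.erase_cons_tail _ (fun h => hra h.symm), Multiset.sum_cons]
        abel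

theorem Graded.sz_mem (h : Graded sz T) {s : Multiset M} {r : M} (hr : r ∈ s) :
    sz r ≤ sz s.sum := by
  obtain ⟨t, rfl⟩ := Multiset.exists_cons_of_mem hr
  rw [Multiset.sum_cons, h.add]
  omega

theorem Graded.factor (h : Graded sz T) :
    ∀ n x, sz x = n → ∃ s : Multiset M, (∀ p ∈ s, Indec sz p) ∧ s.sum = x := by
  intro n
  induction n using Nat.strong_induction_on with
  | _ n ih =>
    intro x hx
    by_cases h0 : sz x = 0
    · exact ⟨0, by simp, by simp [(h.zero x).1 h0]⟩
    · by_cases hp : Indec sz x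
      · exact ⟨{x}, by simpa using hp, by simp⟩
      · have : ∃ y z, x = y + z ∧ sz y ≠ 0 ∧ sz z ≠ 0 := by
          by_contra hc
          push Not at hc
          refine hp ⟨by omega, fun y z hyz => ?_⟩
          by_cases hy : sz y = 0
          · exact Or.inl hy
          · exact Or.inr (hc y z hyz hy)
        obtain ⟨y, z, rfl, hy, hz⟩ := this
        rw [h.add] at hx
        obtain ⟨s, hs, rfl⟩ := ih (sz y) (by omega) y rfl
        obtain ⟨t, ht, rfl⟩ := ih (sz z) (by omega) z rfl
        refine ⟨s + t, ?_, by simp⟩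
        intro p hp
        rcases Multiset.mem_add.1 hp with hp | hp
        · exact hs p hp
        · exact ht p hp

theorem Graded.uniq_aux [DecidableEq M] (h : Graded sz T) (n : ℕ)
    (ih : ∀ s t : Multiset M, (∀ p ∈ s, Indec sz p) → (∀ p ∈ t, Indec sz p) → s.sum = t.sum →
      sz s.sum < n → s = t)
    (s t : Multiset M) (hs : ∀ p ∈ s, Indec sz p) (ht : ∀ p ∈ t, Indec sz p)
    (hst : s.sum = t.sum) (hn : sz s.sum = n) (p : M) (hp : t.count p < s.count p)
    (hmax : ∀ r, sz p < sz r → s.count r = t.count r) : False := by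
  have hfac : ∀ x, ∃ s : Multiset M, (∀ p ∈ s, Indec sz p) ∧ s.sum = x :=
    fun x => h.factor _ x rfl
  choose fac hfac1 hfac2 using hfac
  have facsz : ∀ x q, q ∈ fac x → sz q ≤ sz x := by
    intro x q hq
    have := h.sz_mem hq
    rwa [hfac2] at this
  have erase_sum : ∀ (u : Multiset M) r, r ∈ u → u.sum = r + (u.erase r).sum := by
    intro u r hr
    rw [← Multiset.sum_cons, Multiset.cons_erase hr]
  -- matching of steps
  have key : ∀ (u v : Multiset M), (∀ p ∈ u, Indec sz p) → (∀ p ∈ v, Indec sz p) →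
      u.sum = v.sum → sz u.sum = n → ∀ q ∈ u, ∀ q', T q q' →
      ∃ r ∈ v, ∃ r', T r r' ∧ fac q' + u.erase q = fac r' + v.erase r := by
    intro u v hu hv huv hun q hq q' hT
    have h1 : T u.sum (q' + (u.erase q).sum) := (h.step_sum u _).2 ⟨q, hq, q', hT, rfl⟩
    have h1s := h.step _ _ h1
    rw [huv] at h1
    obtain ⟨r, hr, r', hT', heq⟩ := (h.step_sum v _).1 h1
    refine ⟨r, hr, r', hT', ?_⟩
    apply ih
    · intro x hx
      rcases Multiset.mem_add.1 hx with hx | hx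
      · exact hfac1 _ _ hx
      · exact hu x (Multiset.mem_of_mem_erase hx)
    · intro x hx
      rcases Multiset.mem_add.1 hx with hx | hx
      · exact hfac1 _ _ hx
      · exact hv x (Multiset.mem_of_mem_erase hx)
    · rw [Multiset.sum_add, Multiset.sum_add, hfac2, hfac2, heq]
    · rw [Multiset.sum_add, hfac2]
      omega
  have hps : p ∈ s := Multiset.count_pos.1 (by omega)
  by_cases hc : ∃ q ∈ s, q ≠ p
  · -- maximise
    let Pr : ℕ → Prop := fun e => ∃ q ∈ s, q ≠ p ∧ ∃ q', T q q' ∧ (fac q').count p = e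
    have hex : ∃ e, Pr e := by
      obtain ⟨q, hq, hqp⟩ := hc
      obtain ⟨q', hq'⟩ := h.ex q (hs q hq).1
      exact ⟨_, q, hq, hqp, q', hq', rfl⟩
    have hbound : ∀ e, Pr e → e ≤ n := by
      rintro e ⟨q, hq, hqp, q', hq', rfl⟩
      have h1 := h.step _ _ hq'
      have h2 := h.sz_mem hq
      have h3 : ∀ u : Multiset M, (∀ p ∈ u, Indec sz p) → u.card ≤ sz u.sum := by
        intro u
        induction u using Multiset.induction with
        | empty => simp
        | cons a u ihu =>
          intro hu
          have := ihu (fun x hx => hu x (by simp [hx]))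
          have h4 := (hu a (by simp)).1
          rw [Multiset.card_cons, Multiset.sum_cons, h.add]
          omega
      have h4 := h3 _ (hfac1 q')
      have h5 := Multiset.count_le_card p (fac q')
      rw [hfac2] at h4
      omega
    classical
    obtain ⟨e0, he0⟩ := hex
    have hspec := Nat.findGreatest_spec (P := Pr) (hbound _ he0) he0
    obtain ⟨q, hq, hqp, q', hT, he⟩ := hspec
    obtain ⟨r, hr, r', hT', heq⟩ := key s t hs ht hst hn q hq q' hT
    have hcnt := congrArg (Multiset.count p) heq
    rw [Multiset.count_add, Multiset.count_add, Multiset.count_erase_of_ne hqp.symm] at hcnt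
    have h1 : (t.erase r).count p ≤ t.count p := Multiset.count_le_of_le _ (Multiset.erase_le _ _)
    have h2 : 0 < (fac r').count p := by omega
    have h3 := facsz _ _ (Multiset.count_pos.1 h2)
    have h4 := h.step _ _ hT'
    have h5 := hmax r (by omega)
    have h6 : r ∈ s := Multiset.count_pos.1 (by rw [h5]; exact Multiset.count_pos.2 hr)
    have h7 : r ≠ p := by
      rintro rfl
      omega
    have h8 : Pr ((fac r').count p) := ⟨r, h6, h7, r', hT', rfl⟩
    have h9 := Nat.le_findGreatest (hbound _ h8) h8
    omega
  · push Not at hc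
    have hrep : s = Multiset.replicate s.card p := Multiset.eq_replicate.2 ⟨rfl, hc⟩
    have hcs : s.count p = s.card := Multiset.count_eq_card.2 (fun x hx => (hc x hx).symm)
    have hle : ∀ r ∈ t, sz r ≤ sz p := by
      intro r hr
      by_contra hlt
      have h5 := hmax r (by omega)
      have h6 : r ∈ s := Multiset.count_pos.1 (by rw [h5]; exact Multiset.count_pos.2 hr)
      rw [hc r h6] at hlt
      omega
    have hstep : ∀ r ∈ t, (t.erase r).count p + 1 = s.card := by
      intro r hr
      obtain ⟨r', hT⟩ := h.ex r (ht r hr).1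
      obtain ⟨q, hq, q', hT', heq⟩ := key t s ht hs hst.symm (by rw [← hst, hn]) r hr r' hT
      have hqp := hc q hq
      subst hqp
      have hcnt := congrArg (Multiset.count q) heq
      have small : ∀ x, sz x < sz q → (fac x).count q = 0 := by
        intro x hx
        rw [Multiset.count_eq_zero]
        intro hm
        have := facsz _ _ hm
        omega
      have a1 := h.step _ _ hT
      have a2 := h.step _ _ hT'
      have a3 := hle r hr
      rw [Multiset.count_add, Multiset.count_add, small r' (by omega), small q' (by omega),
        Multiset.count_erase_self] at hcnt
      have a4 := Multiset.count_pos.2 hq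
      omega
    by_cases hpt : p ∈ t
    · have h1 := hstep p hpt
      rw [Multiset.count_erase_self] at h1
      have a4 := Multiset.count_pos.2 hpt
      omega
    · have htne : t ≠ 0 := by
        rintro rfl
        have h1 := h.sz_mem hps
        have h2 := (hs p hps).1
        rw [hst] at h1
        simp [h.sz0] at h1
        omega
      obtain ⟨r, hr⟩ := Multiset.exists_mem_of_ne_zero htne
      have h1 := hstep r hr
      have h2 : (t.erase r).count p = 0 :=
        Multiset.count_eq_zero.2 (fun hm => hpt (Multiset.mem_of_mem_erase hm))
      have hcard : s.card = 1 := by omega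
      rw [hcard, Multiset.replicate_one] at hrep
      have hsum : p = r + (t.erase r).sum := by
        rw [← erase_sum t r hr, ← hst, hrep, Multiset.sum_singleton]
      rcases (hs p hps).2 _ _ hsum with h3 | h3
      · have := (ht r hr).1
        omega
      · have := (h.zero _).1 h3
        rw [this, add_zero] at hsum
        exact hpt (hsum ▸ hr)

theorem Graded.uniq (h : Graded sz T) :
    ∀ s t : Multiset M, (∀ p ∈ s, Indec sz p) → (∀ p ∈ t, Indec sz p) → s.sum = t.sum →
      s = t := by
  classical
  suffices H : ∀ n, ∀ s t : Multiset M, (∀ p ∈ s, Indec sz p) → (∀ p ∈ t, Indec sz p) →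
      s.sum = t.sum → sz s.sum = n → s = t by
    intro s t hs ht hst
    exact H _ s t hs ht hst rfl
  intro n
  induction n using Nat.strong_induction_on with
  | _ n ih =>
    intro s t hs ht hst hn
    by_contra hne
    have hdiff : ∃ p, s.count p ≠ t.count p := by
      by_contra hc
      push Not at hc
      exact hne (Multiset.ext.2 hc)
    let D : Finset M := (s + t).toFinset.filter (fun p => s.count p ≠ t.count p)
    have hD : ∀ p, p ∈ D ↔ s.count p ≠ t.count p := by
      intro p
      simp only [D, Finset.mem_filter, Multiset.mem_toFinset, Multiset.mem_add, and_iff_right_iff_imp]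
      intro hp
      by_contra hc
      push Not at hc
      rw [Multiset.count_eq_zero.2 hc.1, Multiset.count_eq_zero.2 hc.2] at hp
      exact hp rfl
    obtain ⟨p0, hp0⟩ := hdiff
    obtain ⟨p, hpD, hpmax⟩ := D.exists_max_image sz ⟨p0, (hD p0).2 hp0⟩
    have hmax : ∀ r, sz p < sz r → s.count r = t.count r := by
      intro r hr
      by_contra hc
      have := hpmax r ((hD r).2 hc)
      omega
    have ih' : ∀ s t : Multiset M, (∀ p ∈ s, Indec sz p) → (∀ p ∈ t, Indec sz p) →
        s.sum = t.sum → sz s.sum < n → s = t :=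
      fun s t a b c d => ih _ d s t a b c rfl
    rcases Nat.lt_or_gt_of_ne ((hD p).1 hpD) with hlt | hlt
    · exact h.uniq_aux n ih' t s ht hs hst.symm (hst ▸ hn) p hlt (fun r hr => (hmax r hr).symm)
    · exact h.uniq_aux n ih' s t hs ht hst hn p hlt hmax

end UniqueDecomposition

section Quot

variable {A : Type}

open Proc

/-- Two-sided formulation of the coinduction principle. -/
theorem Bisim.of_rel (R : Proc A → Proc A → Prop)
    (h1 : ∀ p q, R p q → ∀ a p', Step p a p' → ∃ q', Step q a q' ∧ R p' q')
    (h2 : ∀ p q, R p q → ∀ a q', Step q a q' → ∃ p', Step p a p' ∧ R p' q')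
    {p q : Proc A} (h : R p q) : Bisim p q := by
  refine ⟨fun x y => R x y ∨ R y x, ⟨?_, ?_⟩, Or.inl h⟩
  · intro x y hxy
    exact hxy.symm
  · rintro x y (hxy | hxy) a x' hx
    · obtain ⟨q', hq, hr⟩ := h1 _ _ hxy _ _ hx
      exact ⟨q', hq, Or.inl hr⟩
    · obtain ⟨q', hq, hr⟩ := h2 _ _ hxy _ _ hx
      exact ⟨q', hq, Or.inr hr⟩

theorem Bisim.step {p q : Proc A} (h : Bisim p q) {a : A} {p' : Proc A} (hp : Step p a p') :
    ∃ q', Step q a q' ∧ Bisim p' q' := by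
  obtain ⟨R, hR, hpq⟩ := h
  obtain ⟨q', hq, hr⟩ := hR.2 _ _ hpq _ _ hp
  exact ⟨q', hq, R, hR, hr⟩

theorem Bisim.refl (p : Proc A) : Bisim p p :=
  ⟨Eq, ⟨fun _ _ h => h.symm, by rintro p q rfl a p' h; exact ⟨p', h, rfl⟩⟩, rfl⟩

theorem Bisim.symm {p q : Proc A} (h : Bisim p q) : Bisim q p := by
  obtain ⟨R, hR, hpq⟩ := h
  exact ⟨R, hR, hR.1 hpq⟩

theorem Bisim.trans {p q r : Proc A} (h : Bisim p q) (h' : Bisim q r) : Bisim p r := by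
  refine Bisim.of_rel (fun x z => ∃ y, Bisim x y ∧ Bisim y z) ?_ ?_ ⟨q, h, h'⟩
  · rintro x z ⟨y, hxy, hyz⟩ a x' hx
    obtain ⟨y', hy, hb⟩ := hxy.step hx
    obtain ⟨z', hz, hb'⟩ := hyz.step hy
    exact ⟨z', hz, y', hb, hb'⟩
  · rintro x z ⟨y, hxy, hyz⟩ a x' hx
    obtain ⟨y', hy, hb⟩ := hyz.symm.step hx
    obtain ⟨z', hz, hb'⟩ := hxy.symm.step hy
    exact ⟨z', hz, y', hb'.symm, hb.symm⟩

theorem step_par {p q : Proc A} {a : A} {r : Proc A} :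
    Step (par p q) a r ↔ (∃ p', Step p a p' ∧ r = par p' q) ∨ (∃ q', Step q a q' ∧ r = par p q') := by
  constructor
  · intro h
    cases h with
    | parL _ h => exact Or.inl ⟨_, h, rfl⟩
    | parR _ h => exact Or.inr ⟨_, h, rfl⟩
  · rintro (⟨p', h, rfl⟩ | ⟨q', h, rfl⟩)
    · exact Step.parL _ h
    · exact Step.parR _ h

theorem Bisim.par {p p' q q' : Proc A} (h : Bisim p p') (h' : Bisim q q') :
    Bisim (par p q) (par p' q') := by
  refine Bisim.of_rel (fun x y => ∃ p p' q q', Bisim p p' ∧ Bisim q q' ∧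
    x = Proc.par p q ∧ y = Proc.par p' q') ?_ ?_ ⟨p, p', q, q', h, h', rfl, rfl⟩
  · rintro _ _ ⟨p, p', q, q', h, h', rfl, rfl⟩ a r hr
    rcases step_par.1 hr with ⟨p1, h1, rfl⟩ | ⟨q1, h1, rfl⟩
    · obtain ⟨y, hy, hb⟩ := h.step h1
      exact ⟨_, Step.parL _ hy, _, _, _, _, hb, h', rfl, rfl⟩
    · obtain ⟨y, hy, hb⟩ := h'.step h1
      exact ⟨_, Step.parR _ hy, _, _, _, _, h, hb, rfl, rfl⟩
  · rintro _ _ ⟨p, p', q, q', h, h', rfl, rfl⟩ a r hr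
    rcases step_par.1 hr with ⟨p1, h1, rfl⟩ | ⟨q1, h1, rfl⟩
    · obtain ⟨y, hy, hb⟩ := h.symm.step h1
      exact ⟨_, Step.parL _ hy, _, _, _, _, hb.symm, h', rfl, rfl⟩
    · obtain ⟨y, hy, hb⟩ := h'.symm.step h1
      exact ⟨_, Step.parR _ hy, _, _, _, _, h, hb.symm, rfl, rfl⟩

theorem Bisim.comm (p q : Proc A) : Bisim (Proc.par p q) (Proc.par q p) := by
  refine Bisim.of_rel (fun x y => ∃ p q, x = Proc.par p q ∧ y = Proc.par q p) ?_ ?_ ⟨p, q, rfl, rfl⟩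
  · rintro _ _ ⟨p, q, rfl, rfl⟩ a r hr
    rcases step_par.1 hr with ⟨p1, h1, rfl⟩ | ⟨q1, h1, rfl⟩
    · exact ⟨_, Step.parR _ h1, _, _, rfl, rfl⟩
    · exact ⟨_, Step.parL _ h1, _, _, rfl, rfl⟩
  · rintro _ _ ⟨p, q, rfl, rfl⟩ a r hr
    rcases step_par.1 hr with ⟨p1, h1, rfl⟩ | ⟨q1, h1, rfl⟩
    · exact ⟨_, Step.parR _ h1, _, _, rfl, rfl⟩
    · exact ⟨_, Step.parL _ h1, _, _, rfl, rfl⟩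

theorem Bisim.assoc (p q r : Proc A) :
    Bisim (Proc.par (Proc.par p q) r) (Proc.par p (Proc.par q r)) := by
  refine Bisim.of_rel (fun x y => ∃ p q r, x = Proc.par (Proc.par p q) r ∧
    y = Proc.par p (Proc.par q r)) ?_ ?_ ⟨p, q, r, rfl, rfl⟩
  · rintro _ _ ⟨p, q, r, rfl, rfl⟩ a z hz
    rcases step_par.1 hz with ⟨p1, h1, rfl⟩ | ⟨q1, h1, rfl⟩
    · rcases step_par.1 h1 with ⟨p2, h2, rfl⟩ | ⟨q2, h2, rfl⟩
      · exact ⟨_, Step.parL _ h2, _, _, _, rfl, rfl⟩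
      · exact ⟨_, Step.parR _ (Step.parL _ h2), _, _, _, rfl, rfl⟩
    · exact ⟨_, Step.parR _ (Step.parR _ h1), _, _, _, rfl, rfl⟩
  · rintro _ _ ⟨p, q, r, rfl, rfl⟩ a z hz
    rcases step_par.1 hz with ⟨p1, h1, rfl⟩ | ⟨q1, h1, rfl⟩
    · exact ⟨_, Step.parL _ (Step.parL _ h1), _, _, _, rfl, rfl⟩
    · rcases step_par.1 h1 with ⟨p2, h2, rfl⟩ | ⟨q2, h2, rfl⟩
      · exact ⟨_, Step.parL _ (Step.parR _ h2), _, _, _, rfl, rfl⟩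
      · exact ⟨_, Step.parR _ h2, _, _, _, rfl, rfl⟩

theorem Bisim.parNil (p : Proc A) : Bisim (Proc.par p Proc.nil) p := by
  refine Bisim.of_rel (fun x y => x = Proc.par y Proc.nil) ?_ ?_ rfl
  · rintro _ q rfl a z hz
    rcases step_par.1 hz with ⟨p1, h1, rfl⟩ | ⟨q1, h1, rfl⟩
    · exact ⟨_, h1, rfl⟩
    · cases h1
  · rintro _ q rfl a z hz
    exact ⟨_, Step.parL _ hz, rfl⟩

/-- Bisimilarity as a setoid. -/
def bisimSetoid (A : Type) : Setoid (Proc A) :=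
  ⟨Bisim, Bisim.refl, Bisim.symm, Bisim.trans⟩

/-- Bisimilarity classes. -/
def BCl (A : Type) : Type := Quotient (bisimSetoid A)

/-- The class of a term. -/
def cl (p : Proc A) : BCl A := Quotient.mk (bisimSetoid A) p

theorem cl_eq {p q : Proc A} : cl p = cl q ↔ Bisim p q :=
  ⟨fun h => Quotient.exact (s := bisimSetoid A) h, fun h => Quotient.sound (s := bisimSetoid A) h⟩

theorem cl_surj (x : BCl A) : ∃ p, cl p = x := Quotient.exists_rep x

/-- Sum of classes. -/
def BCl.add (x y : BCl A) : BCl A :=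
  Quotient.map₂ (sa := bisimSetoid A) (sb := bisimSetoid A) (sc := bisimSetoid A)
    Proc.par (fun _ _ h _ _ h' => Bisim.par h h') x y

instance : Add (BCl A) := ⟨BCl.add⟩
instance : Zero (BCl A) := ⟨cl Proc.nil⟩

theorem cl_par (p q : Proc A) : cl (Proc.par p q) = cl p + cl q := rfl
theorem cl_nil : cl (Proc.nil : Proc A) = 0 := rfl

theorem BCl.add_comm' (x y : BCl A) : x + y = y + x := by
  obtain ⟨p, rfl⟩ := cl_surj x
  obtain ⟨q, rfl⟩ := cl_surj y
  exact cl_eq.2 (Bisim.comm p q)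

theorem BCl.add_zero' (x : BCl A) : x + 0 = x := by
  obtain ⟨p, rfl⟩ := cl_surj x
  exact cl_eq.2 (Bisim.parNil p)

theorem BCl.add_assoc' (x y z : BCl A) : x + y + z = x + (y + z) := by
  obtain ⟨p, rfl⟩ := cl_surj x
  obtain ⟨q, rfl⟩ := cl_surj y
  obtain ⟨r, rfl⟩ := cl_surj z
  exact cl_eq.2 (Bisim.assoc p q r)

instance : AddCommMonoid (BCl A) where
  add_assoc := BCl.add_assoc'
  zero_add x := by rw [BCl.add_comm', BCl.add_zero']
  add_zero := BCl.add_zero'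
  add_comm := BCl.add_comm'
  nsmul := nsmulRec

/-- Transitions between classes. -/
def Tr (x : BCl A) (a : A) (y : BCl A) : Prop :=
  ∃ p p', x = cl p ∧ y = cl p' ∧ Step p a p'

theorem tr_cl {p : Proc A} {a : A} {y : BCl A} :
    Tr (cl p) a y ↔ ∃ p', Step p a p' ∧ y = cl p' := by
  constructor
  · rintro ⟨q, q', h, rfl, hs⟩
    obtain ⟨p', hp, hb⟩ := (cl_eq.1 h).symm.step hs
    exact ⟨p', hp, cl_eq.2 hb⟩
  · rintro ⟨p', hp, rfl⟩
    exact ⟨p, p', rfl, rfl, hp⟩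

theorem tr_add {x y : BCl A} {a : A} {z : BCl A} :
    Tr (x + y) a z ↔ (∃ x', Tr x a x' ∧ z = x' + y) ∨ (∃ y', Tr y a y' ∧ z = x + y') := by
  obtain ⟨p, rfl⟩ := cl_surj x
  obtain ⟨q, rfl⟩ := cl_surj y
  rw [← cl_par, tr_cl]
  constructor
  · rintro ⟨r, hr, rfl⟩
    rcases step_par.1 hr with ⟨p1, h1, rfl⟩ | ⟨q1, h1, rfl⟩
    · exact Or.inl ⟨cl p1, tr_cl.2 ⟨_, h1, rfl⟩, rfl⟩
    · exact Or.inr ⟨cl q1, tr_cl.2 ⟨_, h1, rfl⟩, rfl⟩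
  · rintro (⟨x', h, rfl⟩ | ⟨x', h, rfl⟩)
    · obtain ⟨p', hp, rfl⟩ := tr_cl.1 h
      exact ⟨_, Step.parL _ hp, rfl⟩
    · obtain ⟨p', hp, rfl⟩ := tr_cl.1 h
      exact ⟨_, Step.parR _ hp, rfl⟩

theorem tr_zero {a : A} {z : BCl A} : ¬ Tr 0 a z := by
  rw [← cl_nil, tr_cl]
  rintro ⟨p', h, -⟩
  cases h

theorem tr_pre {a b : A} {p : Proc A} {z : BCl A} :
    Tr (cl (Proc.pre a p)) b z ↔ b = a ∧ z = cl p := by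
  rw [tr_cl]
  constructor
  · rintro ⟨p', h, rfl⟩
    cases h
    exact ⟨rfl, rfl⟩
  · rintro ⟨rfl, rfl⟩
    exact ⟨_, Step.pre, rfl⟩

theorem tr_repl {a b : A} {p : Proc A} {z : BCl A} :
    Tr (cl (Proc.repl a p)) b z ↔ b = a ∧ z = cl (Proc.repl a p) + cl p := by
  rw [tr_cl]
  constructor
  · rintro ⟨p', h, rfl⟩
    cases h
    exact ⟨rfl, rfl⟩
  · rintro ⟨rfl, rfl⟩
    exact ⟨_, Step.repl, rfl⟩

/-- Coinduction on classes. -/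
theorem coind (R : BCl A → BCl A → Prop)
    (h1 : ∀ x y, R x y → ∀ a x', Tr x a x' → ∃ y', Tr y a y' ∧ R x' y')
    (h2 : ∀ x y, R x y → ∀ a y', Tr y a y' → ∃ x', Tr x a x' ∧ R x' y')
    {x y : BCl A} (h : R x y) : x = y := by
  obtain ⟨p, rfl⟩ := cl_surj x
  obtain ⟨q, rfl⟩ := cl_surj y
  refine cl_eq.2 (Bisim.of_rel (fun p q => R (cl p) (cl q)) ?_ ?_ h)
  · intro p q hpq a p' hp
    obtain ⟨y', hy, hr⟩ := h1 _ _ hpq a _ (tr_cl.2 ⟨p', hp, rfl⟩)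
    obtain ⟨q', hq, rfl⟩ := tr_cl.1 hy
    exact ⟨q', hq, hr⟩
  · intro p q hpq a p' hp
    obtain ⟨y', hy, hr⟩ := h2 _ _ hpq a _ (tr_cl.2 ⟨p', hp, rfl⟩)
    obtain ⟨q', hq, rfl⟩ := tr_cl.1 hy
    exact ⟨q', hq, hr⟩

theorem tr_ext {x y : BCl A} (h : ∀ a z, Tr x a z ↔ Tr y a z) : x = y := by
  refine coind (fun u v => u = v ∨ (u = x ∧ v = y)) ?_ ?_ (Or.inr ⟨rfl, rfl⟩)
  · rintro u v (rfl | ⟨rfl, rfl⟩) a z hz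
    · exact ⟨z, hz, Or.inl rfl⟩
    · exact ⟨z, (h a z).1 hz, Or.inl rfl⟩
  · rintro u v (rfl | ⟨rfl, rfl⟩) a z hz
    · exact ⟨z, hz, Or.inl rfl⟩
    · exact ⟨z, (h a z).2 hz, Or.inl rfl⟩

theorem step_finite (p : Proc A) (a : A) : {q | Step p a q}.Finite := by
  induction p with
  | nil =>
    refine Set.finite_empty.subset ?_
    intro q hq
    cases hq
  | pre b p _ =>
    refine (Set.finite_singleton p).subset ?_
    intro q hq
    cases hq
    rfl
  | repl b p _ =>
    refine (Set.finite_singleton (Proc.par (Proc.repl b p) p)).subset ?_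
    intro q hq
    cases hq
    rfl
  | par p q ihp ihq =>
    refine ((ihp.image (fun x => Proc.par x q)).union (ihq.image (fun x => Proc.par p x))).subset ?_
    intro r hr
    rcases step_par.1 hr with ⟨p1, h1, rfl⟩ | ⟨q1, h1, rfl⟩
    · exact Or.inl ⟨p1, h1, rfl⟩
    · exact Or.inr ⟨q1, h1, rfl⟩

theorem tr_finite (x : BCl A) (a : A) : {y | Tr x a y}.Finite := by
  obtain ⟨p, rfl⟩ := cl_surj x
  refine ((step_finite p a).image cl).subset ?_
  intro y hy
  obtain ⟨q, hq, rfl⟩ := tr_cl.1 hy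
  exact ⟨q, hq, rfl⟩

theorem absorb_deriv {x w y : BCl A} {a : A} (h : x + w = x) (hy : Tr x a y) :
    ∃ k : ℕ, y + (k + 1) • w = y := by
  by_contra hbad
  let D := {y : BCl A // Tr x a y ∧ ¬ ∃ k : ℕ, y + (k + 1) • w = y}
  have hfin : Finite D := by
    refine Set.Finite.to_subtype ((tr_finite x a).subset ?_)
    intro z hz
    exact hz.1
  have hpre : ∀ z : D, ∃ z' : D, z'.1 + w = z.1 := by
    rintro ⟨z, hz, hzb⟩
    have hz2 := hz
    rw [← h] at hz2
    rcases tr_add.1 hz2 with ⟨z', hz', rfl⟩ | ⟨v, hv, rfl⟩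
    · refine ⟨⟨z', hz', ?_⟩, rfl⟩
      rintro ⟨k, hk⟩
      apply hzb
      refine ⟨k, ?_⟩
      rw [add_right_comm, hk]
    · exfalso
      apply hzb
      refine ⟨0, ?_⟩
      rw [zero_add, one_nsmul, add_right_comm, h]
  choose g hg using hpre
  have hinj : Function.Injective g := by
    intro u v huv
    apply Subtype.ext
    rw [← hg u, ← hg v, huv]
  have hit : ∀ (n : ℕ) (z : D), (g^[n] z).1 + n • w = z.1 := by
    intro n
    induction n with
    | zero => intro z; simp
    | succ n ih =>
      intro z
      rw [Function.iterate_succ_apply, succ_nsmul, ← add_assoc, ih, hg]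
  obtain ⟨n, hn, hper⟩ := hinj.mem_periodicPts ⟨y, hy, hbad⟩
  obtain ⟨k, rfl⟩ : ∃ k, n = k + 1 := ⟨n - 1, by omega⟩
  have := hit (k + 1) ⟨y, hy, hbad⟩
  rw [hper] at this
  exact hbad ⟨k, this⟩

/-- Antisymmetry of the algebraic preorder. -/
theorem absorb_left {x q r : BCl A} (h : x + (q + r) = x) : x + q = x := by
  symm
  refine coind (fun u v => ∃ q r, v = u + q ∧ u = v + r) ?_ ?_ ⟨q, r, rfl, by rw [add_assoc, h]⟩
  · rintro u v ⟨q, r, rfl, h⟩ a u' hu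
    refine ⟨u' + q, tr_add.2 (Or.inl ⟨u', hu, rfl⟩), ?_⟩
    obtain ⟨k, hk⟩ := absorb_deriv (w := q + r) (by rw [← add_assoc]; exact h.symm) hu
    refine ⟨q, r + k • (q + r), rfl, ?_⟩
    rw [add_assoc, ← add_assoc q, ← succ_nsmul']
    exact hk.symm
  · rintro u v ⟨q, r, rfl, h⟩ a v' hv
    have h' : u + (q + r) = u := by rw [← add_assoc]; exact h.symm
    rcases tr_add.1 hv with ⟨u', hu, rfl⟩ | ⟨q', hq, rfl⟩
    · refine ⟨u', hu, ?_⟩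
      obtain ⟨k, hk⟩ := absorb_deriv h' hu
      refine ⟨q, r + k • (q + r), rfl, ?_⟩
      rw [add_assoc, ← add_assoc q, ← succ_nsmul']
      exact hk.symm
    · have h1 : Tr (u + (q + r)) a (u + (q' + r)) :=
        tr_add.2 (Or.inr ⟨_, tr_add.2 (Or.inl ⟨q', hq, rfl⟩), rfl⟩)
      rw [h'] at h1
      refine ⟨_, h1, q, r, ?_, (add_assoc _ _ _).symm⟩
      have : u + (q' + r) + q = u + (q + r) + q' := by abel
      rw [this, h']

end Quot

section EqDQuot

variable {A : Type}

/-- The congruence as a setoid. -/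
def eqdSetoid (A : Type) : Setoid (Proc A) :=
  ⟨EqD, EqD.refl, EqD.symm, EqD.trans⟩

/-- Classes of terms modulo the congruence. -/
def ECl (A : Type) : Type := Quotient (eqdSetoid A)

/-- The class of a term modulo the congruence. -/
def ec (p : Proc A) : ECl A := Quotient.mk (eqdSetoid A) p

theorem ec_eq {p q : Proc A} : ec p = ec q ↔ EqD p q :=
  ⟨fun h => Quotient.exact (s := eqdSetoid A) h, fun h => Quotient.sound (s := eqdSetoid A) h⟩

theorem ec_surj (x : ECl A) : ∃ p, ec p = x := Quotient.exists_rep x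

/-- Sum of classes. -/
def ECl.add (x y : ECl A) : ECl A :=
  Quotient.map₂ (sa := eqdSetoid A) (sb := eqdSetoid A) (sc := eqdSetoid A)
    Proc.par (fun _ _ h _ _ h' => EqD.congPar h h') x y

instance : Add (ECl A) := ⟨ECl.add⟩
instance : Zero (ECl A) := ⟨ec Proc.nil⟩

theorem ec_par (p q : Proc A) : ec (Proc.par p q) = ec p + ec q := rfl
theorem ec_nil : ec (Proc.nil : Proc A) = 0 := rfl

theorem ECl.add_comm' (x y : ECl A) : x + y = y + x := by
  obtain ⟨p, rfl⟩ := ec_surj x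
  obtain ⟨q, rfl⟩ := ec_surj y
  exact ec_eq.2 (EqD.parComm p q)

theorem ECl.add_zero' (x : ECl A) : x + 0 = x := by
  obtain ⟨p, rfl⟩ := ec_surj x
  exact ec_eq.2 (EqD.parNil p)

theorem ECl.add_assoc' (x y z : ECl A) : x + y + z = x + (y + z) := by
  obtain ⟨p, rfl⟩ := ec_surj x
  obtain ⟨q, rfl⟩ := ec_surj y
  obtain ⟨r, rfl⟩ := ec_surj z
  exact ec_eq.2 (EqD.parAssoc p q r)

instance : AddCommMonoid (ECl A) where
  add_assoc := ECl.add_assoc'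
  zero_add x := by rw [ECl.add_comm', ECl.add_zero']
  add_zero := ECl.add_zero'
  add_comm := ECl.add_comm'
  nsmul := nsmulRec

theorem ec_reps (n : ℕ) (p : Proc A) : ec (Proc.reps n p) = n • ec p := by
  induction n with
  | zero => rw [zero_nsmul]; rfl
  | succ n ih =>
    rw [succ_nsmul', ← ih]
    rfl

theorem cl_reps (n : ℕ) (p : Proc A) : cl (Proc.reps n p) = n • cl p := by
  induction n with
  | zero => rw [zero_nsmul]; rfl
  | succ n ih =>
    rw [succ_nsmul', ← ih]
    rfl

theorem ec_pre {a : A} {p q : Proc A} (h : ec p = ec q) :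
    ec (Proc.pre a p) = ec (Proc.pre a q) := ec_eq.2 (EqD.congPre a (ec_eq.1 h))

theorem ec_repl {a : A} {p q : Proc A} (h : ec p = ec q) :
    ec (Proc.repl a p) = ec (Proc.repl a q) := ec_eq.2 (EqD.congRepl a (ec_eq.1 h))

theorem ec_distr (a : A) (F : Proc A) (n : ℕ) (hF : F.IsFin) :
    ec (Proc.pre a (Proc.par F (Proc.reps n (Proc.pre a F)))) = (n + 1) • ec (Proc.pre a F) := by
  rw [← ec_reps]
  exact ec_eq.2 (EqD.distr a F n hF)

end EqDQuot

section Finite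

variable {A : Type}

theorem fin_step {p p' : Proc A} {a : A} (h : Step p a p') (hp : p.IsFin) :
    p'.IsFin ∧ p'.size + 1 = p.size := by
  induction h with
  | pre => exact ⟨hp, rfl⟩
  | repl => exact hp.elim
  | parL q _ ih =>
    obtain ⟨h1, h2⟩ := ih hp.1
    refine ⟨⟨h1, hp.2⟩, ?_⟩
    simp only [Proc.size]
    omega
  | parR q _ ih =>
    obtain ⟨h1, h2⟩ := ih hp.2
    refine ⟨⟨hp.1, h1⟩, ?_⟩
    simp only [Proc.size]
    omega

theorem fin_ex (p : Proc A) (hs : 0 < p.size) : ∃ a p', Step p a p' := by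
  induction p with
  | nil => simp [Proc.size] at hs
  | pre a p _ => exact ⟨a, p, Step.pre⟩
  | repl a p _ => exact ⟨a, _, Step.repl⟩
  | par p q ihp ihq =>
    simp only [Proc.size] at hs
    rcases Nat.eq_zero_or_pos p.size with h0 | h0
    · obtain ⟨a, q', h⟩ := ihq (by omega)
      exact ⟨a, _, Step.parR _ h⟩
    · obtain ⟨a, q', h⟩ := ihp h0
      exact ⟨a, _, Step.parL _ h⟩

theorem size_zero (p : Proc A) (hs : p.size = 0) : cl p = 0 := by
  induction p with
  | nil => rfl
  | pre a p _ => simp [Proc.size] at hs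
  | repl a p _ => simp [Proc.size] at hs
  | par p q ihp ihq =>
    simp only [Proc.size] at hs
    rw [cl_par, ihp (by omega), ihq (by omega), add_zero]

theorem size_le_of_bisim : ∀ (n : ℕ) (p q : Proc A), p.size = n → p.IsFin → q.IsFin →
    Bisim p q → p.size ≤ q.size := by
  intro n
  induction n with
  | zero => intro p q h _ _ _; omega
  | succ n ih =>
    intro p q h hp hq hb
    obtain ⟨a, p', hs⟩ := fin_ex p (by omega)
    obtain ⟨q', hs', hb'⟩ := hb.step hs
    obtain ⟨h1, h2⟩ := fin_step hs hp
    obtain ⟨h3, h4⟩ := fin_step hs' hq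
    have := ih p' q' (by omega) h1 h3 hb'
    omega

theorem size_eq_of_cl {p q : Proc A} (hp : p.IsFin) (hq : q.IsFin) (h : cl p = cl q) :
    p.size = q.size :=
  le_antisymm (size_le_of_bisim _ p q rfl hp hq (cl_eq.1 h))
    (size_le_of_bisim _ q p rfl hq hp (cl_eq.1 h).symm)

/-- Classes of finite terms. -/
def finSub (A : Type) : AddSubmonoid (BCl A) where
  carrier := {x | ∃ F : Proc A, F.IsFin ∧ cl F = x}
  zero_mem' := ⟨Proc.nil, trivial, rfl⟩
  add_mem' := by
    rintro _ _ ⟨F, hF, rfl⟩ ⟨G, hG, rfl⟩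
    exact ⟨Proc.par F G, ⟨hF, hG⟩, rfl⟩

/-- The class of a finite term, in the submonoid. -/
def fc (F : Proc A) (hF : F.IsFin) : finSub A := ⟨cl F, F, hF, rfl⟩

theorem fc_surj (x : finSub A) : ∃ F hF, x = fc F hF := by
  obtain ⟨_, F, hF, rfl⟩ := x
  exact ⟨F, hF, rfl⟩

/-- Size of a class of finite terms. -/
noncomputable def fsz (x : finSub A) : ℕ := x.2.choose.size

theorem fsz_fc (F : Proc A) (hF : F.IsFin) : fsz (fc F hF) = F.size :=
  size_eq_of_cl (fc F hF).2.choose_spec.1 hF (fc F hF).2.choose_spec.2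

/-- Unlabelled transitions between classes of finite terms. -/
def FT (x y : finSub A) : Prop := ∃ a, Tr x.1 a y.1

theorem fin_tr {x : BCl A} {a : A} {y : BCl A} (hx : x ∈ finSub A) (h : Tr x a y) :
    y ∈ finSub A := by
  obtain ⟨F, hF, rfl⟩ := hx
  obtain ⟨F', hs, rfl⟩ := tr_cl.1 h
  exact ⟨F', (fin_step hs hF).1, rfl⟩

theorem fgraded : Graded (fsz (A := A)) FT where
  zero x := by
    obtain ⟨F, hF, rfl⟩ := fc_surj x
    rw [fsz_fc]
    constructor
    · intro h
      exact Subtype.ext (size_zero F h)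
    · intro h
      have h1 : cl F = cl Proc.nil := congrArg Subtype.val h
      exact size_eq_of_cl (q := Proc.nil) hF trivial h1
  add x y := by
    obtain ⟨F, hF, rfl⟩ := fc_surj x
    obtain ⟨G, hG, rfl⟩ := fc_surj y
    have hFG : (Proc.par F G).IsFin := ⟨hF, hG⟩
    have : fc F hF + fc G hG = fc (Proc.par F G) hFG := rfl
    rw [this, fsz_fc, fsz_fc, fsz_fc]
    rfl
  step x y := by
    obtain ⟨F, hF, rfl⟩ := fc_surj x
    rintro ⟨a, h⟩
    obtain ⟨F', hs, h'⟩ := tr_cl.1 h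
    obtain ⟨h1, h2⟩ := fin_step hs hF
    have : y = fc F' h1 := Subtype.ext h'
    rw [this, fsz_fc, fsz_fc, h2]
  par x y z := by
    constructor
    · rintro ⟨a, h⟩
      rcases tr_add.1 h with ⟨x', hx, hz⟩ | ⟨y', hy, hz⟩
      · exact Or.inl ⟨⟨x', fin_tr x.2 hx⟩, ⟨a, hx⟩, Subtype.ext hz⟩
      · exact Or.inr ⟨⟨y', fin_tr y.2 hy⟩, ⟨a, hy⟩, Subtype.ext hz⟩
    · rintro (⟨x', ⟨a, hx⟩, rfl⟩ | ⟨y', ⟨a, hy⟩, rfl⟩)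
      · exact ⟨a, tr_add.2 (Or.inl ⟨_, hx, rfl⟩)⟩
      · exact ⟨a, tr_add.2 (Or.inr ⟨_, hy, rfl⟩)⟩
  ex x := by
    obtain ⟨F, hF, rfl⟩ := fc_surj x
    rw [fsz_fc]
    intro h
    obtain ⟨a, F', hs⟩ := fin_ex F h
    exact ⟨fc F' (fin_step hs hF).1, a, tr_cl.2 ⟨F', hs, rfl⟩⟩

theorem cl_pre_inj {a b : A} {p q : Proc A} (h : cl (Proc.pre a p) = cl (Proc.pre b q)) :
    a = b ∧ cl p = cl q := by
  have : Tr (cl (Proc.pre a p)) a (cl p) := tr_pre.2 ⟨rfl, rfl⟩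
  rw [h] at this
  exact tr_pre.1 this

/-- A decomposable prefixed term is a power of a single prefixed term. -/
theorem pre_decomp (a : A) (F : Proc A) (hF : F.IsFin) :
    ∃ (k : ℕ) (G : Proc A) (hG : G.IsFin),
      Indec fsz (fc (Proc.pre a G) hG) ∧
      cl F = cl (Proc.par G (Proc.reps k (Proc.pre a G))) := by
  classical
  have hgr := fgraded (A := A)
  obtain ⟨s, hs, hsum⟩ := hgr.factor _ (fc (Proc.pre a F) hF) rfl
  have hne : s ≠ 0 := by
    rintro rfl
    have := fsz_fc (Proc.pre a F) hF
    rw [← hsum, Multiset.sum_zero, hgr.sz0] at this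
    simp [Proc.size] at this
  have hstep : ∀ p ∈ s, ∀ b q, Tr p.1 b q → b = a ∧ cl F = q + ((s.erase p).sum : finSub A).1 := by
    intro p hp b q hq
    have h1 : s.sum = p + (s.erase p).sum := by
      rw [← Multiset.sum_cons, Multiset.cons_erase hp]
    have h2 : Tr (p + (s.erase p).sum : finSub A).1 b (q + ((s.erase p).sum : finSub A).1) :=
      tr_add.2 (Or.inl ⟨q, hq, rfl⟩)
    rw [← h1, hsum] at h2
    have h3 := tr_pre.1 h2
    exact ⟨h3.1, h3.2.symm⟩
  have hfac : ∀ x : finSub A, ∃ s : Multiset (finSub A), (∀ p ∈ s, Indec fsz p) ∧ s.sum = x :=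
    fun x => hgr.factor _ x rfl
  choose fac hfac1 hfac2 using hfac
  -- matching derivatives
  have hmatch : ∀ p ∈ s, ∀ p' ∈ s, ∀ q q' : finSub A, FT p q → FT p' q' →
      fac q + s.erase p = fac q' + s.erase p' := by
    rintro p hp p' hp' q q' ⟨b, hq⟩ ⟨b', hq'⟩
    have h1 := (hstep p hp b _ hq).2
    have h2 := (hstep p' hp' b' _ hq').2
    apply hgr.uniq
    · intro x hx
      rcases Multiset.mem_add.1 hx with hx | hx
      · exact hfac1 _ _ hx
      · exact hs x (Multiset.mem_of_mem_erase hx)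
    · intro x hx
      rcases Multiset.mem_add.1 hx with hx | hx
      · exact hfac1 _ _ hx
      · exact hs x (Multiset.mem_of_mem_erase hx)
    · rw [Multiset.sum_add, Multiset.sum_add, hfac2, hfac2]
      exact Subtype.ext (h1.symm.trans h2)
  obtain ⟨p, hp⟩ := Multiset.exists_mem_of_ne_zero hne
  have hall : ∀ r ∈ s, r = p := by
    intro r hr
    by_contra hrp
    obtain ⟨q, hq⟩ := hgr.ex p (hs p hp).1
    obtain ⟨q', hq'⟩ := hgr.ex r (hs r hr).1
    have h1 := congrArg (Multiset.count p) (hmatch p hp r hr q q' hq hq')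
    rw [Multiset.count_add, Multiset.count_add, Multiset.count_erase_self,
      Multiset.count_erase_of_ne (fun h => hrp h.symm)] at h1
    have h2 : (fac q).count p = 0 := by
      rw [Multiset.count_eq_zero]
      intro hm
      have h3 := hgr.sz_mem hm
      rw [hfac2] at h3
      have h4 := hgr.step _ _ hq
      omega
    have h5 := Multiset.count_pos.2 hp
    omega
  obtain ⟨q, b, hq⟩ := hgr.ex p (hs p hp).1
  obtain ⟨G, hG, rfl⟩ := fc_surj q
  obtain ⟨rfl, hFq⟩ := hstep p hp b _ hq
  have hpG : p = fc (Proc.pre b G) hG := by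
    apply Subtype.ext
    apply tr_ext
    intro c z
    have hz2 : Tr (fc (Proc.pre b G) hG : finSub A).1 c z ↔ c = b ∧ z = cl G := tr_pre
    rw [hz2]
    constructor
    · intro hz
      have hc := (hstep p hp c z hz).1
      refine ⟨hc, ?_⟩
      have h1 := hmatch p hp p hp ⟨z, fin_tr p.2 hz⟩ (fc G hG) ⟨c, hz⟩ ⟨b, hq⟩
      have h2 := add_right_cancel h1
      have h3 : (⟨z, fin_tr p.2 hz⟩ : finSub A) = fc G hG := by
        rw [← hfac2 ⟨z, fin_tr p.2 hz⟩, h2, hfac2]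
      exact congrArg Subtype.val h3
    · rintro ⟨rfl, rfl⟩
      exact hq
  have hrep : s.erase p = Multiset.replicate (s.erase p).card p :=
    Multiset.eq_replicate.2 ⟨rfl, fun x hx => hall x (Multiset.mem_of_mem_erase hx)⟩
  refine ⟨(s.erase p).card, G, hG, hpG ▸ hs p hp, ?_⟩
  rw [cl_par, cl_reps, hFq]
  congr 1
  rw [hrep, Multiset.sum_replicate, Multiset.card_replicate, hpG]
  rfl

/-- Canonical congruence class of a prime class. -/
noncomputable def canon (x : finSub A) : ECl A := by
  classical
  exact if h : ∃ y : A × Proc A, y.2.IsFin ∧ x.1 = cl (Proc.pre y.1 y.2) then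
    ec (Proc.pre h.choose.1 h.choose.2) else 0

theorem canon_pre {n : ℕ}
    (ih : ∀ F G : Proc A, F.size < n → F.IsFin → G.IsFin → cl F = cl G → ec F = ec G)
    (a : A) (G : Proc A) (hG : G.IsFin) (hn : G.size < n) :
    canon (fc (Proc.pre a G) hG) = ec (Proc.pre a G) := by
  have h : ∃ y : A × Proc A, y.2.IsFin ∧ (fc (Proc.pre a G) hG).1 = cl (Proc.pre y.1 y.2) :=
    ⟨(a, G), hG, rfl⟩
  unfold canon
  rw [dif_pos h]
  have h1 := h.choose_spec.1
  obtain ⟨h2, h3⟩ := cl_pre_inj (show cl (Proc.pre a G) = _ from h.choose_spec.2)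
  rw [← h2]
  exact (ec_pre (ih G _ hn hG h1 h3)).symm

theorem fin_normal {n : ℕ}
    (ih : ∀ F G : Proc A, F.size < n → F.IsFin → G.IsFin → cl F = cl G → ec F = ec G)
    (F : Proc A) (hF : F.IsFin) (hn : F.size ≤ n) :
    ∃ s : Multiset (finSub A), (∀ p ∈ s, Indec fsz p) ∧ s.sum = fc F hF ∧
      ec F = (s.map canon).sum := by
  induction F with
  | nil => exact ⟨0, by simp, rfl, rfl⟩
  | repl => exact hF.elim
  | par F G ihF ihG =>
    simp only [Proc.size] at hn
    obtain ⟨s, h1, h2, h3⟩ := ihF hF.1 (by omega)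
    obtain ⟨t, h4, h5, h6⟩ := ihG hF.2 (by omega)
    refine ⟨s + t, ?_, ?_, ?_⟩
    · intro p hp
      rcases Multiset.mem_add.1 hp with hp | hp
      · exact h1 p hp
      · exact h4 p hp
    · rw [Multiset.sum_add, h2, h5]
      rfl
    · rw [Multiset.map_add, Multiset.sum_add, ← h3, ← h6]
      rfl
  | pre a F _ =>
    simp only [Proc.size] at hn
    obtain ⟨k, G, hG, hI, hcl⟩ := pre_decomp a F hF
    have hfin : ∀ k, (Proc.reps k (Proc.pre a G)).IsFin := by
      intro k
      induction k with
      | zero => trivial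
      | succ k ih => exact ⟨hG, ih⟩
    have hfin2 : (Proc.par G (Proc.reps k (Proc.pre a G))).IsFin := ⟨hG, hfin k⟩
    have hF' : F.IsFin := hF
    have hsz := size_eq_of_cl hF' hfin2 hcl
    simp only [Proc.size] at hsz
    have he := ih F _ (by omega) hF hfin2 hcl
    have he2 := ec_pre (a := a) he
    rw [ec_distr a G k hG] at he2
    refine ⟨Multiset.replicate (k + 1) (fc (Proc.pre a G) hG), ?_, ?_, ?_⟩
    · intro p hp
      rw [Multiset.eq_of_mem_replicate hp]
      exact hI
    · rw [Multiset.sum_replicate]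
      apply Subtype.ext
      change (k + 1) • cl (Proc.pre a G) = cl (Proc.pre a F)
      apply tr_ext
      intro b z
      rw [tr_pre]
      have key : ∀ m : ℕ, Tr ((m + 1) • cl (Proc.pre a G)) b z ↔
          b = a ∧ z = cl G + m • cl (Proc.pre a G) := by
        intro m
        induction m generalizing z with
        | zero => rw [zero_add, one_nsmul, zero_nsmul, add_zero, tr_pre]
        | succ m ihm =>
          rw [succ_nsmul, tr_add]
          constructor
          · rintro (⟨x', hx, rfl⟩ | ⟨y', hy, rfl⟩)
            · obtain ⟨rfl, rfl⟩ := (ihm _).1 hx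
              exact ⟨rfl, by rw [succ_nsmul, add_assoc]⟩
            · obtain ⟨rfl, rfl⟩ := tr_pre.1 hy
              exact ⟨rfl, add_comm _ _⟩
          · rintro ⟨rfl, rfl⟩
            exact Or.inr ⟨cl G, tr_pre.2 ⟨rfl, rfl⟩, add_comm _ _⟩
      rw [key, hcl, cl_par, cl_reps]
    · rw [Multiset.map_replicate, Multiset.sum_replicate, canon_pre ih a G hG (by omega), he2]

/-- Completeness on finite terms. -/
theorem fin_complete (F G : Proc A) (hF : F.IsFin) (hG : G.IsFin) (h : cl F = cl G) :
    ec F = ec G := by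
  suffices H : ∀ n, ∀ F G : Proc A, F.size = n → F.IsFin → G.IsFin → cl F = cl G →
      ec F = ec G from H _ F G rfl hF hG h
  intro n
  induction n using Nat.strong_induction_on with
  | _ n ih =>
    intro F G hn hF hG h
    have ih' : ∀ F G : Proc A, F.size < n → F.IsFin → G.IsFin → cl F = cl G → ec F = ec G :=
      fun F G h1 h2 h3 h4 => ih _ h1 F G rfl h2 h3 h4
    have hsz := size_eq_of_cl hF hG h
    obtain ⟨s, h1, h2, h3⟩ := fin_normal ih' F hF (by omega)
    obtain ⟨t, h4, h5, h6⟩ := fin_normal ih' G hG (by omega)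
    have hst : s = t := fgraded.uniq s t h1 h4 (by rw [h2, h5]; exact Subtype.ext h)
    rw [h3, h6, hst]

end Finite

section Seeds

variable {A : Type}

/-- Finite part. -/
def fp : Proc A → Proc A
  | .nil => .nil
  | .pre a p => .pre a p
  | .par p q => .par (fp p) (fp q)
  | .repl _ _ => .nil

/-- Replicated components. -/
def rp : Proc A → Multiset (A × Proc A)
  | .nil => 0
  | .pre _ _ => 0
  | .par p q => rp p + rp q
  | .repl a p => {(a, p)}

/-- Class of a product of replicated components. -/
def sg (s : Multiset (A × Proc A)) : BCl A := (s.map (fun x => cl (Proc.repl x.1 x.2))).sum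

/-- Size of a product of replicated components. -/
def msz (s : Multiset (A × Proc A)) : ℕ := (s.map (fun x => x.2.size + 1)).sum

theorem sg_cons (x : A × Proc A) (s : Multiset (A × Proc A)) :
    sg (x ::ₘ s) = cl (Proc.repl x.1 x.2) + sg s := by simp [sg]

theorem msz_cons (x : A × Proc A) (s : Multiset (A × Proc A)) :
    msz (x ::ₘ s) = x.2.size + 1 + msz s := by simp [msz]

theorem fp_fin (P : Proc A) (h : P.Wf) : (fp P).IsFin := by
  induction P with
  | nil => trivial
  | pre a p _ => exact h
  | repl a p _ => trivial
  | par p q ihp ihq => exact ⟨ihp h.1, ihq h.2⟩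

theorem rp_fin (P : Proc A) (h : P.Wf) : ∀ x ∈ rp P, x.2.IsFin := by
  induction P with
  | nil => simp [rp]
  | pre a p _ => simp [rp]
  | repl a p _ =>
    intro x hx
    simp only [rp, Multiset.mem_singleton] at hx
    subst hx
    exact h
  | par p q ihp ihq =>
    intro x hx
    rcases Multiset.mem_add.1 hx with hx | hx
    · exact ihp h.1 x hx
    · exact ihq h.2 x hx

theorem size_split (P : Proc A) : P.size = (fp P).size + msz (rp P) := by
  induction P with
  | nil => simp [fp, rp, msz, Proc.size]
  | pre a p _ => simp [fp, rp, msz, Proc.size]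
  | repl a p _ => simp [fp, rp, msz, Proc.size]
  | par p q ihp ihq =>
    simp only [fp, rp, msz, Proc.size, Multiset.map_add, Multiset.sum_add] at *
    omega

theorem cl_split (P : Proc A) : cl P = cl (fp P) + sg (rp P) := by
  induction P with
  | nil => simp [fp, rp, sg]
  | pre a p _ => simp [fp, rp, sg]
  | repl a p _ => simp [fp, rp, sg, cl_nil]
  | par p q ihp ihq =>
    have h1 : sg (rp p + rp q) = sg (rp p) + sg (rp q) := by simp [sg]
    rw [fp, rp, h1, cl_par, cl_par, ihp, ihq]
    abel

theorem ec_split (P : Proc A) :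
    ec P = ec (fp P) + ((rp P).map (fun x => ec (Proc.repl x.1 x.2))).sum := by
  induction P with
  | nil => simp [fp, rp]
  | pre a p _ => simp [fp, rp]
  | repl a p _ => simp [fp, rp, ec_nil]
  | par p q ihp ihq =>
    rw [fp, rp, Multiset.map_add, Multiset.sum_add, ec_par, ec_par, ihp, ihq]
    abel

theorem sg_term (s : Multiset (A × Proc A)) (h : ∀ x ∈ s, x.2.IsFin) :
    ∃ Q : Proc A, Q.Wf ∧ Q.size = msz s ∧ cl Q = sg s := by
  induction s using Multiset.induction with
  | empty => exact ⟨Proc.nil, trivial, by simp [msz, Proc.size], by simp [sg, cl_nil]⟩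
  | cons x s ih =>
    obtain ⟨Q, h1, h2, h3⟩ := ih (fun y hy => h y (by simp [hy]))
    refine ⟨Proc.par (Proc.repl x.1 x.2) Q, ⟨h x (by simp), h1⟩, ?_, ?_⟩
    · rw [msz_cons, ← h2]
      rfl
    · rw [sg_cons, ← h3, cl_par]

theorem fin_wf (F : Proc A) (h : F.IsFin) : F.Wf := by
  induction F with
  | nil => trivial
  | pre a p _ => exact h
  | repl a p _ => exact h.elim
  | par p q ihp ihq => exact ⟨ihp h.1, ihq h.2⟩

/-- Minimality in terms of decompositions. -/
theorem seed_min {P : Proc A} (hP : IsSeed P) (F : Proc A) (s : Multiset (A × Proc A))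
    (hF : F.IsFin) (hs : ∀ x ∈ s, x.2.IsFin) (h : cl F + sg s = cl (fp P) + sg (rp P)) :
    (fp P).size + msz (rp P) ≤ F.size + msz s := by
  obtain ⟨Q, h1, h2, h3⟩ := sg_term s hs
  have := hP.2 (Proc.par F Q) ⟨fin_wf F hF, h1⟩ (cl_eq.1 (by rw [cl_par, h3, h, ← cl_split]))
  rw [size_split P] at this
  rw [← h2]
  exact this

theorem tr_sg {s : Multiset (A × Proc A)} {a : A} {z : BCl A} :
    Tr (sg s) a z ↔ ∃ G, (a, G) ∈ s ∧ z = cl G + sg s := by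
  induction s using Multiset.induction generalizing z with
  | empty =>
    have : sg (0 : Multiset (A × Proc A)) = 0 := by simp [sg]
    rw [this]
    constructor
    · intro h
      exact (tr_zero h).elim
    · simp
  | cons x s ih =>
    obtain ⟨b, H⟩ := x
    rw [sg_cons, tr_add]
    constructor
    · rintro (⟨x', hx, rfl⟩ | ⟨y', hy, rfl⟩)
      · obtain ⟨rfl, rfl⟩ := tr_repl.1 hx
        exact ⟨H, by simp, by abel⟩
      · obtain ⟨G, hG, rfl⟩ := ih.1 hy
        exact ⟨G, by simp [hG], by abel⟩
    · rintro ⟨G, hG, rfl⟩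
      rcases Multiset.mem_cons.1 hG with hG | hG
      · obtain ⟨rfl, rfl⟩ := Prod.mk.inj hG
        exact Or.inl ⟨_, tr_repl.2 ⟨rfl, rfl⟩, by abel⟩
      · exact Or.inr ⟨_, ih.2 ⟨G, hG, rfl⟩, by abel⟩

/-- Replacing replicated components by equivalent ones. -/
theorem sg_replace {s t : Multiset (A × Proc A)}
    (h1 : ∀ a G, (a, G) ∈ s → ∃ H, (a, H) ∈ t ∧ cl G + sg s = cl H + sg s)
    (h2 : ∀ a H, (a, H) ∈ t → ∃ G, (a, G) ∈ s ∧ cl G + sg s = cl H + sg s) : sg s = sg t := by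
  refine coind (fun x y => ∃ z, x = z + sg s ∧ y = z + sg t) ?_ ?_ ⟨0, by simp, by simp⟩
  · rintro x y ⟨z, rfl, rfl⟩ a x' hx
    rcases tr_add.1 hx with ⟨z', hz, rfl⟩ | ⟨w, hw, rfl⟩
    · exact ⟨_, tr_add.2 (Or.inl ⟨z', hz, rfl⟩), z', rfl, rfl⟩
    · obtain ⟨G, hG, rfl⟩ := tr_sg.1 hw
      obtain ⟨H, hH, he⟩ := h1 a G hG
      refine ⟨_, tr_add.2 (Or.inr ⟨_, tr_sg.2 ⟨H, hH, rfl⟩, rfl⟩), z + cl H, ?_, ?_⟩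
      · rw [he, add_assoc]
      · rw [add_assoc]
  · rintro x y ⟨z, rfl, rfl⟩ a y' hy
    rcases tr_add.1 hy with ⟨z', hz, rfl⟩ | ⟨w, hw, rfl⟩
    · exact ⟨_, tr_add.2 (Or.inl ⟨z', hz, rfl⟩), z', rfl, rfl⟩
    · obtain ⟨H, hH, rfl⟩ := tr_sg.1 hw
      obtain ⟨G, hG, he⟩ := h2 a H hH
      refine ⟨_, tr_add.2 (Or.inr ⟨_, tr_sg.2 ⟨G, hG, rfl⟩, rfl⟩), z + cl H, ?_, ?_⟩
      · rw [he, add_assoc]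
      · rw [add_assoc]

/-- Finite terms no prefixed subterm of which is absorbed. -/
def Good (c : BCl A) : Proc A → Prop
  | .nil => True
  | .pre a p => cl (Proc.pre a p) + c ≠ c ∧ Good c p
  | .par p q => Good c p ∧ Good c q
  | .repl _ _ => False

theorem Good.fin {c : BCl A} {p : Proc A} (h : Good c p) : p.IsFin := by
  induction p with
  | nil => trivial
  | pre a p ih => exact ih h.2
  | repl a p _ => exact h.elim
  | par p q ihp ihq => exact ⟨ihp h.1, ihq h.2⟩

theorem Good.step {c : BCl A} {p p' : Proc A} {a : A} (hs : Step p a p') (h : Good c p) :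
    Good c p' := by
  induction hs with
  | pre => exact h.2
  | repl => exact h.elim
  | parL q _ ih => exact ⟨ih h.1, h.2⟩
  | parR q _ ih => exact ⟨h.1, ih h.2⟩

theorem Good.absorbed {c : BCl A} {p : Proc A} (h : Good c p) (ha : cl p + c = c) :
    p.size = 0 := by
  induction p with
  | nil => rfl
  | pre a p _ => exact (h.1 ha).elim
  | repl a p _ => exact h.elim
  | par p q ihp ihq =>
    rw [cl_par] at ha
    have h1 : c + cl p = c := absorb_left (r := cl q) (by rw [add_comm, ha])
    have h2 : c + cl q = c := absorb_left (r := cl p) (by rw [add_comm c, add_comm (cl q), ha])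
    have h3 := ihp h.1 (by rw [add_comm, h1])
    have h4 := ihq h.2 (by rw [add_comm, h2])
    simp only [Proc.size]
    omega

theorem pre_cong {c : BCl A} {a : A} {p q : Proc A} (h : cl p + c = cl q + c)
    (hc : ∀ b c', Tr c b c' → ∃ G, c' = G + c) :
    cl (Proc.pre a p) + c = cl (Proc.pre a q) + c := by
  refine coind (fun x y => x = y ∨ ∃ z, x = z + (cl (Proc.pre a p) + c) ∧
    y = z + (cl (Proc.pre a q) + c)) ?_ ?_ (Or.inr ⟨0, by simp, by simp⟩)
  · rintro x y (rfl | ⟨z, rfl, rfl⟩) b x' hx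
    · exact ⟨x', hx, Or.inl rfl⟩
    · rcases tr_add.1 hx with ⟨z', hz, rfl⟩ | ⟨w, hw, rfl⟩
      · exact ⟨_, tr_add.2 (Or.inl ⟨z', hz, rfl⟩), Or.inr ⟨z', rfl, rfl⟩⟩
      · rcases tr_add.1 hw with ⟨v, hv, rfl⟩ | ⟨v, hv, rfl⟩
        · obtain ⟨rfl, rfl⟩ := tr_pre.1 hv
          exact ⟨_, tr_add.2 (Or.inr ⟨_, tr_add.2 (Or.inl ⟨_, tr_pre.2 ⟨rfl, rfl⟩, rfl⟩), rfl⟩),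
            Or.inl (by rw [h])⟩
        · obtain ⟨G, rfl⟩ := hc _ _ hv
          exact ⟨_, tr_add.2 (Or.inr ⟨_, tr_add.2 (Or.inr ⟨_, hv, rfl⟩), rfl⟩),
            Or.inr ⟨z + G, by abel, by abel⟩⟩
  · rintro x y (rfl | ⟨z, rfl, rfl⟩) b x' hx
    · exact ⟨x', hx, Or.inl rfl⟩
    · rcases tr_add.1 hx with ⟨z', hz, rfl⟩ | ⟨w, hw, rfl⟩
      · exact ⟨_, tr_add.2 (Or.inl ⟨z', hz, rfl⟩), Or.inr ⟨z', rfl, rfl⟩⟩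
      · rcases tr_add.1 hw with ⟨v, hv, rfl⟩ | ⟨v, hv, rfl⟩
        · obtain ⟨rfl, rfl⟩ := tr_pre.1 hv
          exact ⟨_, tr_add.2 (Or.inr ⟨_, tr_add.2 (Or.inl ⟨_, tr_pre.2 ⟨rfl, rfl⟩, rfl⟩), rfl⟩),
            Or.inl (by rw [h])⟩
        · obtain ⟨G, rfl⟩ := hc _ _ hv
          exact ⟨_, tr_add.2 (Or.inr ⟨_, tr_add.2 (Or.inr ⟨_, hv, rfl⟩), rfl⟩),
            Or.inr ⟨z + G, by abel, by abel⟩⟩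

theorem not_good {c : BCl A} (hc : ∀ b c', Tr c b c' → ∃ G, c' = G + c) (F : Proc A)
    (hF : F.IsFin) (h : ¬ Good c F) :
    ∃ F' : Proc A, F'.IsFin ∧ F'.size < F.size ∧ cl F' + c = cl F + c := by
  induction F with
  | nil => exact (h trivial).elim
  | repl a p _ => exact hF.elim
  | pre a p ih =>
    by_cases ha : cl (Proc.pre a p) + c = c
    · exact ⟨Proc.nil, trivial, by simp [Proc.size], by rw [ha, cl_nil, zero_add]⟩
    · obtain ⟨F', h1, h2, h3⟩ := ih hF (fun hg => h ⟨ha, hg⟩)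
      exact ⟨Proc.pre a F', h1, by simpa [Proc.size] using h2, pre_cong h3 hc⟩
  | par p q ihp ihq =>
    by_cases hp : Good c p
    · obtain ⟨F', h1, h2, h3⟩ := ihq hF.2 (fun hg => h ⟨hp, hg⟩)
      refine ⟨Proc.par p F', ⟨hF.1, h1⟩, by simpa [Proc.size] using h2, ?_⟩
      rw [cl_par, cl_par, add_assoc, h3, add_assoc]
    · obtain ⟨F', h1, h2, h3⟩ := ihp hF.1 hp
      refine ⟨Proc.par F' q, ⟨h1, hF.2⟩, by simpa [Proc.size] using h2, ?_⟩
      rw [cl_par, cl_par, add_right_comm, h3, add_right_comm]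

theorem tr_sg_form (s : Multiset (A × Proc A)) : ∀ b c', Tr (sg s) b c' → ∃ G, c' = G + sg s := by
  intro b c' h
  obtain ⟨G, -, rfl⟩ := tr_sg.1 h
  exact ⟨_, rfl⟩

theorem seed_good_fp {P : Proc A} (hP : IsSeed P) : Good (sg (rp P)) (fp P) := by
  by_contra hg
  obtain ⟨F', h1, h2, h3⟩ := not_good (tr_sg_form _) (fp P) (fp_fin P hP.1) hg
  have := seed_min hP F' (rp P) h1 (rp_fin P hP.1) h3
  omega

theorem seed_good_rp {P : Proc A} (hP : IsSeed P) : ∀ a G, (a, G) ∈ rp P → Good (sg (rp P)) G := by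
  intro a G hG
  by_contra hg
  have hGf := rp_fin P hP.1 _ hG
  obtain ⟨F', h1, h2, h3⟩ := not_good (tr_sg_form _) G hGf hg
  obtain ⟨t, ht⟩ := Multiset.exists_cons_of_mem hG
  have heq : sg (rp P) = sg ((a, F') ::ₘ t) := by
    apply sg_replace
    · intro b H hH
      rw [ht, Multiset.mem_cons] at hH
      rcases hH with hH | hH
      · obtain ⟨rfl, rfl⟩ := Prod.mk.inj hH
        exact ⟨F', by simp, h3.symm⟩
      · exact ⟨H, by simp [hH], rfl⟩
    · intro b H hH
      rw [Multiset.mem_cons] at hH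
      rcases hH with hH | hH
      · obtain ⟨rfl, rfl⟩ := Prod.mk.inj hH
        exact ⟨G, hG, h3.symm⟩
      · exact ⟨H, by simp [ht, hH], rfl⟩
  have := seed_min hP (fp P) ((a, F') ::ₘ t) (fp_fin P hP.1) (by
    intro x hx
    rcases Multiset.mem_cons.1 hx with rfl | hx
    · exact h1
    · exact rp_fin P hP.1 x (by simp [ht, hx])) (by rw [heq])
  rw [ht, msz_cons, msz_cons] at this
  simp only at this
  omega

theorem seed_nodup {P : Proc A} (hP : IsSeed P) :
    ((rp P).map (fun x => (x.1, cl x.2))).Nodup := by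
  classical
  by_contra hnd
  rw [Multiset.nodup_iff_le] at hnd
  push Not at hnd
  obtain ⟨y, hy⟩ := hnd
  obtain ⟨u, hu⟩ := Multiset.le_iff_exists_add.1 hy
  have hmem : y ∈ (rp P).map (fun x => (x.1, cl x.2)) := by rw [hu]; simp
  obtain ⟨x1, hx1, hxy1⟩ := Multiset.mem_map.1 hmem
  obtain ⟨t, ht⟩ := Multiset.exists_cons_of_mem hx1
  have hu2 : t.map (fun x => (x.1, cl x.2)) = y ::ₘ u := by
    rw [ht, Multiset.map_cons, hxy1, Multiset.cons_add, Multiset.cons_add, zero_add] at hu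
    exact (Multiset.cons_inj_right y).1 hu
  have hmem2 : y ∈ t.map (fun x => (x.1, cl x.2)) := by rw [hu2]; simp
  obtain ⟨x2, hx2, hxy2⟩ := Multiset.mem_map.1 hmem2
  have hxx : x1.1 = x2.1 ∧ cl x1.2 = cl x2.2 := by
    have := hxy1.trans hxy2.symm
    exact Prod.mk.inj this
  have heq : sg (rp P) = sg t := by
    apply sg_replace
    · intro b H hH
      rw [ht, Multiset.mem_cons] at hH
      rcases hH with hH | hH
      · subst hH
        refine ⟨x2.2, ?_, by rw [← hxx.2]⟩
        have : b = x2.1 := hxx.1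
        rw [this]
        exact hx2
      · exact ⟨H, hH, rfl⟩
    · intro b H hH
      exact ⟨H, by simp [ht, hH], rfl⟩
  have := seed_min hP (fp P) t (fp_fin P hP.1) (by
    intro x hx
    exact rp_fin P hP.1 x (by simp [ht, hx])) (by rw [heq])
  rw [ht, msz_cons] at this
  omega

/-- Reachability in a given number of steps. -/
inductive RN : ℕ → BCl A → BCl A → Prop where
  | zero (x : BCl A) : RN 0 x x
  | succ {n : ℕ} {x y z : BCl A} (a : A) : Tr x a y → RN n y z → RN (n + 1) x z

theorem rn_fin (c : BCl A) : ∀ (n : ℕ) (F : Proc A), F.IsFin → F.size = n → RN n (cl F + c) c := by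
  intro n
  induction n with
  | zero =>
    intro F _ hn
    rw [size_zero F hn, zero_add]
    exact RN.zero c
  | succ n ih =>
    intro F hF hn
    obtain ⟨a, F', hs⟩ := fin_ex F (by omega)
    obtain ⟨h1, h2⟩ := fin_step hs hF
    exact RN.succ a (tr_add.2 (Or.inl ⟨cl F', tr_cl.2 ⟨F', hs, rfl⟩, rfl⟩)) (ih F' h1 (by omega))

theorem rn_form {c : BCl A} (hc : ∀ b c', Tr c b c' → ∃ G, c' = G + c) {n : ℕ} {x z : BCl A}
    (h : RN n x z) : (∃ w, x = w + c) → ∃ w, z = w + c := by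
  induction h with
  | zero x => exact id
  | succ a ht _ ih =>
    rintro ⟨w, rfl⟩
    apply ih
    rcases tr_add.1 ht with ⟨z', hz, rfl⟩ | ⟨v, hv, rfl⟩
    · exact ⟨z', rfl⟩
    · obtain ⟨G, rfl⟩ := hc _ _ hv
      exact ⟨w + G, by abel⟩

theorem rn_good {s : Multiset (A × Proc A)} (hs : ∀ a G, (a, G) ∈ s → Good (sg s) G) :
    ∀ (n : ℕ) (F : Proc A), Good (sg s) F → RN n (cl F + sg s) (sg s) → F.size ≤ n := by
  intro n
  induction n with
  | zero =>
    intro F hF h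
    generalize hx : cl F + sg s = x at h
    generalize hy : sg s = y at h
    cases h
    rw [← hy] at hx
    rw [hF.absorbed hx]
  | succ n ih =>
    intro F hF h
    generalize hx : cl F + sg s = x at h
    generalize hy : sg s = y at h
    cases h with
    | succ a ht hr =>
      subst hx
      rw [← hy] at hr
      rcases tr_add.1 ht with ⟨z', hz, rfl⟩ | ⟨v, hv, rfl⟩
      · obtain ⟨F', hst, rfl⟩ := tr_cl.1 hz
        have h1 := ih F' (hF.step hst) hr
        have h2 := (fin_step hst hF.fin).2
        omega
      · obtain ⟨G, hG, rfl⟩ := tr_sg.1 hv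
        rw [← add_assoc, ← cl_par] at hr
        have h1 := ih (Proc.par F G) ⟨hF, hs a G hG⟩ hr
        simp only [Proc.size] at h1
        omega

theorem good_size {s : Multiset (A × Proc A)} (hs : ∀ a G, (a, G) ∈ s → Good (sg s) G)
    {F F' : Proc A} (hF : Good (sg s) F) (hF' : Good (sg s) F')
    (h : cl F + sg s = cl F' + sg s) : F.size = F'.size := by
  apply le_antisymm
  · apply rn_good hs _ F hF
    rw [h]
    exact rn_fin _ _ F' hF'.fin rfl
  · apply rn_good hs _ F' hF'
    rw [← h]
    exact rn_fin _ _ F hF.fin rfl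

/-- Cancellation of the replicated part. -/
theorem good_cancel {s : Multiset (A × Proc A)} (hs : ∀ a G, (a, G) ∈ s → Good (sg s) G)
    {F F' : Proc A} (hF : Good (sg s) F) (hF' : Good (sg s) F')
    (h : cl F + sg s = cl F' + sg s) : cl F = cl F' := by
  refine cl_eq.2 ⟨fun p q => Good (sg s) p ∧ Good (sg s) q ∧ cl p + sg s = cl q + sg s,
    ⟨fun p q h => ⟨h.2.1, h.1, h.2.2.symm⟩, ?_⟩, hF, hF', h⟩
  rintro p q ⟨hp, hq, heq⟩ a p' hst
  have h1 : Tr (cl p + sg s) a (cl p' + sg s) :=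
    tr_add.2 (Or.inl ⟨_, tr_cl.2 ⟨p', hst, rfl⟩, rfl⟩)
  have hsz := good_size hs hp hq heq
  have hp' := hp.step hst
  have h2 := (fin_step hst hp.fin).2
  rw [heq] at h1
  rcases tr_add.1 h1 with ⟨z', hz, he⟩ | ⟨v, hv, he⟩
  · obtain ⟨q', hq', rfl⟩ := tr_cl.1 hz
    exact ⟨q', hq', hp', hq.step hq', he⟩
  · obtain ⟨G, hG, rfl⟩ := tr_sg.1 hv
    rw [← add_assoc, ← cl_par] at he
    have h3 := good_size hs hp' (show Good (sg s) (Proc.par q G) from ⟨hq, hs a G hG⟩) he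
    simp only [Proc.size] at h3
    omega

/-- Bisimilar terms have bisimilar replicated parts. -/
theorem sg_eq {F F' : Proc A} {s t : Multiset (A × Proc A)} (hF : F.IsFin) (hF' : F'.IsFin)
    (h : cl F + sg s = cl F' + sg t) : sg s = sg t := by
  have h1 := rn_fin (sg s) _ F hF rfl
  have h2 := rn_fin (sg t) _ F' hF' rfl
  rw [h] at h1
  rw [← h] at h2
  obtain ⟨w, hw⟩ := rn_form (tr_sg_form t) h1 ⟨_, rfl⟩
  obtain ⟨v, hv⟩ := rn_form (tr_sg_form s) h2 ⟨_, rfl⟩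
  have h3 : sg s + (v + w) = sg s := by
    conv_rhs => rw [hw, hv]
    abel
  have h4 := absorb_left h3
  rw [hv, add_comm, h4]

/-- Canonical class of a replicated component. -/
noncomputable def rcanon (x : A × BCl A) : ECl A := by
  classical
  exact if h : ∃ G : Proc A, G.IsFin ∧ cl G = x.2 then ec (Proc.repl x.1 h.choose) else 0

theorem rcanon_eq (a : A) (G : Proc A) (hG : G.IsFin) : rcanon (a, cl G) = ec (Proc.repl a G) := by
  have h : ∃ H : Proc A, H.IsFin ∧ cl H = (a, cl G).2 := ⟨G, hG, rfl⟩
  unfold rcanon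
  rw [dif_pos h]
  exact ec_repl (fin_complete _ G h.choose_spec.1 hG h.choose_spec.2)

theorem rp_ec {P : Proc A} (hP : P.Wf) :
    ((rp P).map (fun x => ec (Proc.repl x.1 x.2))).sum =
      (((rp P).map (fun x => (x.1, cl x.2))).map rcanon).sum := by
  rw [Multiset.map_map]
  congr 1
  apply Multiset.map_congr rfl
  intro x hx
  exact (rcanon_eq x.1 x.2 (rp_fin P hP x hx)).symm

theorem seeds_main (P P' : Proc A) (hP : IsSeed P) (hP' : IsSeed P') (h : Bisim P P') :
    EqD P P' := by
  have h0 := cl_eq.2 h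
  rw [cl_split P, cl_split P'] at h0
  have hsg := sg_eq (fp_fin P hP.1) (fp_fin P' hP'.1) h0
  have g1 := seed_good_fp hP
  have g2 := seed_good_rp hP
  have g3 := seed_good_fp hP'
  have g4 := seed_good_rp hP'
  rw [← hsg] at g3 g4 h0
  have hfp := good_cancel g2 g1 g3 h0
  have hfe := fin_complete _ _ (fp_fin P hP.1) (fp_fin P' hP'.1) hfp
  have hcomp : (rp P).map (fun x => (x.1, cl x.2)) = (rp P').map (fun x => (x.1, cl x.2)) := by
    rw [Multiset.Nodup.ext (seed_nodup hP) (seed_nodup hP')]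
    intro y
    simp only [Multiset.mem_map]
    constructor
    · rintro ⟨⟨a, G⟩, hG, rfl⟩
      have h1 : Tr (sg (rp P)) a (cl G + sg (rp P)) := tr_sg.2 ⟨G, hG, rfl⟩
      rw [hsg] at h1
      obtain ⟨H, hH, he⟩ := tr_sg.1 h1
      rw [← hsg] at he
      exact ⟨(a, H), hH, by rw [good_cancel g2 (g2 a G hG) (g4 a H hH) he]⟩
    · rintro ⟨⟨a, G⟩, hG, rfl⟩
      have h1 : Tr (sg (rp P')) a (cl G + sg (rp P')) := tr_sg.2 ⟨G, hG, rfl⟩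
      rw [← hsg] at h1
      obtain ⟨H, hH, he⟩ := tr_sg.1 h1
      exact ⟨(a, H), hH, by rw [good_cancel g2 (g4 a G hG) (g2 a H hH) he]⟩
  apply ec_eq.1
  rw [ec_split P, ec_split P', hfe, rp_ec hP.1, rp_ec hP'.1, hcomp]

end Seeds

end CCS

/-- Uniqueness of seeds: if `P ~ P'` and both are seeds, then `P ≡D P'`. -/
theorem seeds_unique {A : Type} [Countable A]
    (P P' : CCS.Proc A) (hP : CCS.IsSeed P) (hP' : CCS.IsSeed P')
    (h : CCS.Bisim P P') :
    CCS.EqD P P' := by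
  exact CCS.seeds_main P P' hP hP' h
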